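/- Let 1 ≤ ℓ ≤ m−1, and let R = [[0, R₁₂],[R₂₁, R₂₂]] and S = [[0, S₁₂],[S₂₁, S₂₂]] be m×m complex matrices whose rows are partitioned (ℓ, m−ℓ) and columns (m−ℓ, ℓ), with R₁₂, S₁₂ ∈ ℂ^{ℓ×ℓ} and R₂₁, S₂₁ ∈ ℂ^{(m−ℓ)×(m−ℓ)} antitriangular, and such that the pencils R₁₂ − λS₁₂ and R₂₁ − λS₂₁ are regular with disjoint spectra (including infinity), i.e., for every (μ, ν) ≠ (0, 0) in ℂ², det(μR₁₂ − νS₁₂) and det(μR₂₁ − νS₂₁) do not both vanish. Then: (i) the system XR₁₂ + R₂₁Y = −R₂₂, XS₁₂ + S₂₁Y = −S₂₂ has a unique solution (X, Y) with X, Y ∈ ℂ^{(m−ℓ)×ℓ}; (ii) there exist unitary matrices Q, P ∈ ℂ^{m×m}, antitriangular matrices Ñ₂₁, M̃₂₁ ∈ ℂ^{(m−ℓ)×(m−ℓ)} and Ñ₁₂, M̃₁₂ ∈ ℂ^{ℓ×ℓ}, matrices Ñ₂₂, M̃₂₂, and nonzero constants c₁, c₂ ∈ ℂ such that QᵀRP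 = [[0, Ñ₂₁],[Ñ₁₂, Ñ₂₂]] and QᵀSP = [[0, M̃₂₁],[M̃₁₂, M̃₂₂]] (rows partitioned (m−ℓ, ℓ) and columns (ℓ, m−ℓ)), with det(Ñ₁₂ + zM̃₁₂) = c₁·det(R₁₂ + zS₁₂) and det(Ñ₂₁ + zM̃₂₁) = c₂·det(R₂₁ + zS₂₁) for all z ∈ ℂ. -/

import Mathlib

open scoped Matrix

/-- A k×k matrix is antitriangular if `N i j = 0` whenever `i + j ≤ k` (1-based),
i.e. `(i+1) + (j+1) ≤ k` for 0-based indices. -/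
def Antitriangular {k : ℕ} (N : Matrix (Fin k) (Fin k) ℂ) : Prop :=
  ∀ i j : Fin k, (i : ℕ) + 1 + ((j : ℕ) + 1) ≤ k → N i j = 0

/-!
If `X R₁₂ + R₂₁ Y = -R₂₂`, then multiplying `[[0, R₁₂], [R₂₁, R₂₂]]` on the left by
`[[X, 1], [1, -Xᴴ]]` and on the right by `[[Y, 1], [1, -Yᴴ]]` gives
`[[0, R₂₁ (1 + Y Yᴴ)], [(1 + Xᴴ X) R₁₂, ∗]]`, so the two antidiagonal blocks trade places. The two
multipliers have orthogonal block rows, respectively columns, and Cholesky factors make them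
unitary. These factors can be chosen triangular, in such a way that every antidiagonal block is
multiplied by a lower triangular matrix on the left and an upper triangular one on the right, which
preserves antitriangularity.

The equations for `X` and `Y` are solved by forward substitution: reversing the order of some rows
and columns makes the coefficients triangular, and the `(i, j)` entries of `X` and `Y` then satisfy
a `2 × 2` system whose determinant vanishes only if the pencils share an eigenvalue.
-/

section

open Matrix

section GeneralizedSylvester

variable {K m n : Type*} [Fintype m] [Fintype n]

/-- The operator `(X, Y) ↦ (X A₁ + B₁ Y, X A₂ + B₂ Y)` of the generalized Sylvester equation for
the pencils `A₁ - λ A₂` and `B₁ - λ B₂`. -/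
def generalizedSylvester [CommRing K] (A₁ A₂ : Matrix n n K) (B₁ B₂ : Matrix m m K) :
    Matrix m n K × Matrix m n K →ₗ[K] Matrix m n K × Matrix m n K :=
  ((mulRightLinearMap m K A₁).coprod (mulLeftLinearMap n K B₁)).prod
    ((mulRightLinearMap m K A₂).coprod (mulLeftLinearMap n K B₂))

lemma existsUnique_mul_add_mul_eq_of_forall_eq_zero [Field K] {A₁ A₂ : Matrix n n K}
    {B₁ B₂ : Matrix m m K}
    (hker : ∀ X Y : Matrix m n K, X * A₁ + B₁ * Y = 0 → X * A₂ + B₂ * Y = 0 → X = 0 ∧ Y = 0)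
    (C₁ C₂ : Matrix m n K) :
    ∃! p : Matrix m n K × Matrix m n K, p.1 * A₁ + B₁ * p.2 = C₁ ∧ p.1 * A₂ + B₂ * p.2 = C₂ := by
  have hinj : Function.Injective (generalizedSylvester A₁ A₂ B₁ B₂) := by
    refine (injective_iff_map_eq_zero _).2 fun p hp => ?_
    obtain ⟨h₁, h₂⟩ := Prod.mk.inj hp
    exact Prod.ext_iff.2 (hker p.1 p.2 h₁ h₂)
  have hbij : Function.Bijective (generalizedSylvester A₁ A₂ B₁ B₂) :=
    ⟨hinj, LinearMap.injective_iff_surjective.1 hinj⟩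
  exact (existsUnique_congr fun p => Prod.ext_iff).1 (hbij.existsUnique (C₁, C₂))

variable [LinearOrder m] [LinearOrder n]

lemma mul_add_mul_apply_of_triangular [CommRing K] {U : Matrix n n K} {L : Matrix m m K}
    (hU : U.IsUpperTriangular) (hL : L.IsLowerTriangular) {X Y : Matrix m n K} {i : m} {j : n}
    (hX : ∀ b < j, X i b = 0) (hY : ∀ a < i, Y a j = 0) :
    (X * U + L * Y) i j = X i j * U j j + L i i * Y i j := by
  have hXU : (X * U) i j = X i j * U j j := by
    refine mul_apply.trans (Fintype.sum_eq_single j fun b hb => ?_)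
    rcases hb.lt_or_gt with hb | hb
    · rw [hX b hb, zero_mul]
    · rw [hU hb, mul_zero]
  have hLY : (L * Y) i j = L i i * Y i j := by
    refine mul_apply.trans (Fintype.sum_eq_single i fun a ha => ?_)
    rcases ha.lt_or_gt with ha | ha
    · rw [hY a ha, mul_zero]
    · rw [hL ha, zero_mul]
  rw [Matrix.add_apply, hXU, hLY]

lemma eq_zero_of_mul_add_mul_eq_zero_of_triangular [CommRing K] [NoZeroDivisors K]
    {U₁ U₂ : Matrix n n K} {L₁ L₂ : Matrix m m K}
    (hU₁ : U₁.IsUpperTriangular) (hU₂ : U₂.IsUpperTriangular)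
    (hL₁ : L₁.IsLowerTriangular) (hL₂ : L₂.IsLowerTriangular)
    (hdiag : ∀ i j, U₁ j j * L₂ i i - U₂ j j * L₁ i i ≠ 0) {X Y : Matrix m n K}
    (h₁ : X * U₁ + L₁ * Y = 0) (h₂ : X * U₂ + L₂ * Y = 0) : X = 0 ∧ Y = 0 := by
  suffices h : ∀ i j, X i j = 0 ∧ Y i j = 0 from
    ⟨ext fun i j => (h i j).1, ext fun i j => (h i j).2⟩
  intro i
  induction i using WellFoundedLT.induction with | _ i ih_row
  intro j
  induction j using WellFoundedLT.induction with | _ j ih_col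
  have hX : ∀ b < j, X i b = 0 := fun b hb => (ih_col b hb).1
  have hY : ∀ a < i, Y a j = 0 := fun a ha => (ih_row a ha j).2
  have e₁ : X i j * U₁ j j + L₁ i i * Y i j = 0 := by
    rw [← mul_add_mul_apply_of_triangular hU₁ hL₁ hX hY, h₁, Matrix.zero_apply]
  have e₂ : X i j * U₂ j j + L₂ i i * Y i j = 0 := by
    rw [← mul_add_mul_apply_of_triangular hU₂ hL₂ hX hY, h₂, Matrix.zero_apply]
  -- Cramer's rule
  exact ⟨(mul_eq_zero_iff_right (hdiag i j)).1 (by linear_combination L₂ i i * e₁ - L₁ i i * e₂),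
    (mul_eq_zero_iff_right (hdiag i j)).1 (by linear_combination U₁ j j * e₂ - U₂ j j * e₁)⟩

end GeneralizedSylvester

namespace Antitriangular

variable {k ℓ q : ℕ}

lemma iff_isLowerTriangular {N : Matrix (Fin k) (Fin k) ℂ} :
    Antitriangular N ↔ (N.submatrix id Fin.rev).IsLowerTriangular := by
  refine ⟨fun hN i j hij => hN _ _ ?_, fun hN i j hij => ?_⟩
  · have hij : i < j := hij
    simp only [id, Fin.val_rev, Fin.lt_def] at hij ⊢
    omega
  · have hlt : i < j.rev := by
      simp only [Fin.val_rev, Fin.lt_def]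
      omega
    have hzero : N i j.rev.rev = 0 := hN hlt
    rwa [Fin.rev_rev] at hzero

lemma isUpperTriangular {N : Matrix (Fin k) (Fin k) ℂ} (hN : Antitriangular N) :
    (N.submatrix Fin.rev id).IsUpperTriangular := by
  intro i j hij
  have hij : j < i := hij
  refine hN _ _ ?_
  simp only [id, Fin.val_rev, Fin.lt_def] at hij ⊢
  omega

lemma mul_mul {N L U : Matrix (Fin k) (Fin k) ℂ} (hN : Antitriangular N)
    (hL : L.IsLowerTriangular) (hU : U.IsUpperTriangular) : Antitriangular (L * N * U) := by
  have hU' : (U.submatrix Fin.rev Fin.rev).IsLowerTriangular := fun i j hij =>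
    hU (Fin.rev_lt_rev.2 hij)
  rw [iff_isLowerTriangular] at hN ⊢
  rw [submatrix_mul (L * N) U id Fin.rev Fin.rev Fin.rev_bijective,
    submatrix_mul L N id id Fin.rev Function.bijective_id, submatrix_id_id]
  exact (hL.mul hN).mul hU'

lemma smul_sub_smul {A B : Matrix (Fin k) (Fin k) ℂ} (hA : Antitriangular A)
    (hB : Antitriangular B) (μ ν : ℂ) : Antitriangular (μ • A - ν • B) := by
  intro i j hij
  simp only [Matrix.sub_apply, Matrix.smul_apply, hA i j hij, hB i j hij, smul_zero, sub_zero]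

lemma det_eq_zero {N : Matrix (Fin k) (Fin k) ℂ} (hN : Antitriangular N) {i : Fin k}
    (hi : N i i.rev = 0) : N.det = 0 := by
  have hrev : (N.submatrix id Fin.rev).det = 0 := by
    rw [det_of_isLowerTriangular _ (iff_isLowerTriangular.1 hN)]
    exact Finset.prod_eq_zero (Finset.mem_univ i) hi
  have hsign : ((Fin.revPerm : Equiv.Perm (Fin k)).sign : ℂ) ≠ 0 :=
    Int.cast_ne_zero.2 (Units.ne_zero _)
  exact (mul_eq_zero_iff_left hsign).1 ((det_permute' Fin.revPerm N).symm.trans hrev)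

variable {R₁₂ S₁₂ : Matrix (Fin ℓ) (Fin ℓ) ℂ} {R₂₁ S₂₁ : Matrix (Fin q) (Fin q) ℂ}

lemma antidiag_mul_sub_mul_ne_zero (hR₁₂ : Antitriangular R₁₂) (hS₁₂ : Antitriangular S₁₂)
    (hR₂₁ : Antitriangular R₂₁) (hS₂₁ : Antitriangular S₂₁)
    (hdisj : ∀ μ ν : ℂ, (μ, ν) ≠ (0, 0) →
      ¬ ((μ • R₁₂ - ν • S₁₂).det = 0 ∧ (μ • R₂₁ - ν • S₂₁).det = 0)) (i : Fin q) (j : Fin ℓ) :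
    R₁₂ j.rev j * S₂₁ i i.rev - S₁₂ j.rev j * R₂₁ i i.rev ≠ 0 := by
  intro h
  obtain ⟨v, hv, hMv⟩ : ∃ v ≠ 0,
      !![R₁₂ j.rev j, -S₁₂ j.rev j; R₂₁ i i.rev, -S₂₁ i i.rev] *ᵥ v = 0 := by
    refine exists_mulVec_eq_zero_iff.2 ?_
    rw [det_fin_two_of]
    linear_combination -h
  have h₁ : R₁₂ j.rev j * v 0 + -S₁₂ j.rev j * v 1 = 0 := by
    simpa [mulVec, dotProduct, Fin.sum_univ_two] using congrFun hMv 0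
  have h₂ : R₂₁ i i.rev * v 0 + -S₂₁ i i.rev * v 1 = 0 := by
    simpa [mulVec, dotProduct, Fin.sum_univ_two] using congrFun hMv 1
  refine hdisj (v 0) (v 1) (fun h0 => hv ?_)
    ⟨(hR₁₂.smul_sub_smul hS₁₂ _ _).det_eq_zero (i := j.rev) ?_,
      (hR₂₁.smul_sub_smul hS₂₁ _ _).det_eq_zero (i := i) ?_⟩
  · obtain ⟨h0, h1⟩ := Prod.mk.inj h0
    ext a
    fin_cases a <;> assumption
  · simp only [Matrix.sub_apply, Matrix.smul_apply, smul_eq_mul, Fin.rev_rev]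
    linear_combination h₁
  · simp only [Matrix.sub_apply, Matrix.smul_apply, smul_eq_mul]
    linear_combination h₂

lemma existsUnique_mul_add_mul_eq (hR₁₂ : Antitriangular R₁₂) (hS₁₂ : Antitriangular S₁₂)
    (hR₂₁ : Antitriangular R₂₁) (hS₂₁ : Antitriangular S₂₁)
    (hdisj : ∀ μ ν : ℂ, (μ, ν) ≠ (0, 0) →
      ¬ ((μ • R₁₂ - ν • S₁₂).det = 0 ∧ (μ • R₂₁ - ν • S₂₁).det = 0))
    (C₁ C₂ : Matrix (Fin q) (Fin ℓ) ℂ) :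
    ∃! p : Matrix (Fin q) (Fin ℓ) ℂ × Matrix (Fin q) (Fin ℓ) ℂ,
      p.1 * R₁₂ + R₂₁ * p.2 = C₁ ∧ p.1 * S₁₂ + S₂₁ * p.2 = C₂ := by
  refine existsUnique_mul_add_mul_eq_of_forall_eq_zero (fun X Y hR hS => ?_) C₁ C₂
  have hrev : ∀ (A : Matrix (Fin ℓ) (Fin ℓ) ℂ) (B : Matrix (Fin q) (Fin q) ℂ),
      X.submatrix id Fin.rev * A.submatrix Fin.rev id +
        B.submatrix id Fin.rev * Y.submatrix Fin.rev id = X * A + B * Y := fun A B => by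
    rw [← submatrix_mul X A id _ id Fin.rev_bijective,
      ← submatrix_mul B Y id _ id Fin.rev_bijective, submatrix_id_id, submatrix_id_id]
  obtain ⟨hX, hY⟩ := eq_zero_of_mul_add_mul_eq_zero_of_triangular
    hR₁₂.isUpperTriangular hS₁₂.isUpperTriangular
    (iff_isLowerTriangular.1 hR₂₁) (iff_isLowerTriangular.1 hS₂₁)
    (antidiag_mul_sub_mul_ne_zero hR₁₂ hS₁₂ hR₂₁ hS₂₁ hdisj)
    ((hrev R₁₂ R₂₁).trans hR) ((hrev S₁₂ S₂₁).trans hS)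
  constructor
  · ext i j
    simpa using congrFun₂ hX i j.rev
  · ext i j
    simpa using congrFun₂ hY i.rev j

end Antitriangular

lemma isUpperTriangular_conjTranspose {R n : Type*} [AddMonoid R] [StarAddMonoid R] [LT n]
    {L : Matrix n n R} (hL : L.IsLowerTriangular) : Lᴴ.IsUpperTriangular := fun i j hij => by
  rw [conjTranspose_apply, hL hij, star_zero]

section GraphMatrix

variable {R m n : Type*} [Ring R] [StarRing R] [DecidableEq m] [DecidableEq n]

/-- The matrix whose rows are those of `[X, 1]`, which span the graph of a linear map, followed by
those of `[1, -Xᴴ]`, which are orthogonal to them. Rescaling the two block rows makes it unitary. -/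
def graphMatrix (X : Matrix m n R) : Matrix (m ⊕ n) (n ⊕ m) R :=
  fromBlocks X 1 1 (-Xᴴ)

lemma conjTranspose_graphMatrix (X : Matrix m n R) : (graphMatrix X)ᴴ = graphMatrix Xᴴ := by
  simp only [graphMatrix, fromBlocks_conjTranspose, conjTranspose_one, conjTranspose_neg]

variable [Fintype m] [Fintype n]

lemma graphMatrix_mul_conjTranspose (X : Matrix m n R) :
    graphMatrix X * (graphMatrix X)ᴴ = fromBlocks (1 + X * Xᴴ) 0 0 (1 + Xᴴ * X) := by
  rw [conjTranspose_graphMatrix]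
  simp [graphMatrix, fromBlocks_multiply, add_comm]

lemma graphMatrix_mul_fromBlocks_mul_graphMatrix {R₁₂ : Matrix n n R} {R₂₁ : Matrix m m R}
    {R₂₂ X Y : Matrix m n R} (h : X * R₁₂ + R₂₁ * Y = -R₂₂) :
    graphMatrix X * fromBlocks 0 R₁₂ R₂₁ R₂₂ * graphMatrix Y =
      fromBlocks 0 (R₂₁ * (1 + Y * Yᴴ)) ((1 + Xᴴ * X) * R₁₂)
        ((Xᴴ * R₂₂ - R₁₂) * Yᴴ - Xᴴ * R₂₁) := by
  obtain rfl : R₂₂ = -(X * R₁₂ + R₂₁ * Y) := (neg_eq_iff_eq_neg.2 h).symm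
  simp only [graphMatrix, fromBlocks_multiply, fromBlocks_inj]
  refine ⟨?_, ?_, ?_, ?_⟩ <;>
  · simp only [Matrix.mul_add, Matrix.add_mul, Matrix.sub_mul, Matrix.mul_neg, Matrix.neg_mul,
      Matrix.mul_zero, Matrix.zero_mul, Matrix.mul_one, Matrix.one_mul, Matrix.mul_assoc]
    abel

end GraphMatrix

section UnitarySwap

open scoped ComplexOrder

variable {𝕜 m n : Type*} [RCLike 𝕜]

lemma posDef_one_add_mul_conjTranspose [Fintype n] [Finite m] [DecidableEq m] (X : Matrix m n 𝕜) :
    (1 + X * Xᴴ).PosDef :=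
  PosDef.one.add_posSemidef (posSemidef_self_mul_conjTranspose X)

variable [Fintype m] [LinearOrder m] [LocallyFiniteOrderBot m]
variable [Fintype n] [LinearOrder n] [LocallyFiniteOrderBot n]

lemma exists_isLowerTriangular_mul_mul_conjTranspose_eq_one {G : Matrix n n 𝕜} (hG : G.PosDef) :
    ∃ T : Matrix n n 𝕜, T.IsLowerTriangular ∧ T * G * Tᴴ = 1 := by
  have hpos : ∀ i, 0 < LDL.diagEntries hG i := posDef_diagonal_iff.1 <| by
    rw [← LDL.diag, LDL.diag_eq_lowerInv_conj]
    exact (isUnit_of_invertible (LDL.lowerInv hG)).posDef_star_right_conjugate_iff.2 hG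
  choose d hd hdiag using fun i => RCLike.pos_iff_exists_ofReal.1 (hpos i)
  set D : Matrix n n 𝕜 := diagonal fun i => ((√(d i))⁻¹ : ℝ)
  have hD : D * LDL.diag hG * Dᴴ = 1 := by
    rw [LDL.diag, diagonal_conjTranspose, diagonal_mul_diagonal, diagonal_mul_diagonal,
      ← diagonal_one]
    congr 1
    ext i
    have hscale : (√(d i))⁻¹ * d i * (√(d i))⁻¹ = 1 := by
      rw [← div_eq_inv_mul, Real.div_sqrt, mul_inv_cancel₀ (Real.sqrt_pos.2 (hd i)).ne']
    rw [Pi.star_apply, RCLike.star_def, RCLike.conj_ofReal, ← hdiag i]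
    exact_mod_cast congrArg ((↑) : ℝ → 𝕜) hscale
  refine ⟨D * LDL.lowerInv hG,
    (blockTriangular_diagonal _).mul fun i j hij => LDL.lowerInv_triangular hG hij, ?_⟩
  rw [← hD, LDL.diag_eq_lowerInv_conj, conjTranspose_mul]
  simp only [Matrix.mul_assoc]

lemma exists_isLowerTriangular_mul_and_mul_mul_conjTranspose_eq_one {G : Matrix n n 𝕜}
    (hG : G.PosDef) :
    ∃ V : Matrix n n 𝕜, (V * G).IsLowerTriangular ∧ V * G * Vᴴ = 1 := by
  obtain ⟨W, hW, hWG⟩ := exists_isLowerTriangular_mul_mul_conjTranspose_eq_one hG.inv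
  have hVG : W * G⁻¹ * G = W :=
    nonsing_inv_mul_cancel_right _ _ ((isUnit_iff_isUnit_det G).1 hG.isUnit)
  refine ⟨W * G⁻¹, hVG.symm ▸ hW, ?_⟩
  rw [hVG, conjTranspose_mul, hG.inv.isHermitian.eq, ← Matrix.mul_assoc, hWG]

lemma exists_isLowerTriangular_fromBlocks_mul_graphMatrix_unitary (X : Matrix m n 𝕜) :
    ∃ (T : Matrix m m 𝕜) (V : Matrix n n 𝕜),
      T.IsLowerTriangular ∧ T.det ≠ 0 ∧
      (V * (1 + Xᴴ * X)).IsLowerTriangular ∧ (V * (1 + Xᴴ * X)).det ≠ 0 ∧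
      (fromBlocks T 0 0 V * graphMatrix X) * (fromBlocks T 0 0 V * graphMatrix X)ᴴ = 1 := by
  have hG : (1 + Xᴴ * X).PosDef := by
    simpa only [conjTranspose_conjTranspose] using posDef_one_add_mul_conjTranspose Xᴴ
  obtain ⟨T, hT, hTX⟩ := exists_isLowerTriangular_mul_mul_conjTranspose_eq_one
    (posDef_one_add_mul_conjTranspose X)
  obtain ⟨V, hV, hVX⟩ := exists_isLowerTriangular_mul_and_mul_mul_conjTranspose_eq_one hG
  refine ⟨T, V, hT, ?_, hV, det_ne_zero_of_right_inverse hVX, ?_⟩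
  · rw [Matrix.mul_assoc] at hTX
    exact det_ne_zero_of_right_inverse hTX
  · calc
      _ = fromBlocks T 0 0 V * (graphMatrix X * (graphMatrix X)ᴴ) * (fromBlocks T 0 0 V)ᴴ := by
        simp only [conjTranspose_mul, Matrix.mul_assoc]
      _ = fromBlocks (T * (1 + X * Xᴴ) * Tᴴ) 0 0 (V * (1 + Xᴴ * X) * Vᴴ) := by
        simp [graphMatrix_mul_conjTranspose, fromBlocks_conjTranspose, fromBlocks_multiply]
      _ = 1 := by rw [hTX, hVX, fromBlocks_one]

lemma exists_unitary_swap_antidiagonal_blocks (X Y : Matrix m n 𝕜) :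
    ∃ (Q : Matrix (n ⊕ m) (m ⊕ n) 𝕜) (P : Matrix (m ⊕ n) (n ⊕ m) 𝕜)
      (L₁ U₁ : Matrix n n 𝕜) (L₂ U₂ : Matrix m m 𝕜),
      Qᴴ * Q = 1 ∧ Pᴴ * P = 1 ∧
      L₁.IsLowerTriangular ∧ U₁.IsUpperTriangular ∧ L₂.IsLowerTriangular ∧ U₂.IsUpperTriangular ∧
      L₁.det * U₁.det ≠ 0 ∧ L₂.det * U₂.det ≠ 0 ∧
      ∀ (R₁₂ : Matrix n n 𝕜) (R₂₁ : Matrix m m 𝕜) (R₂₂ : Matrix m n 𝕜),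
        X * R₁₂ + R₂₁ * Y = -R₂₂ →
        ∃ N₂₂, Qᵀ * fromBlocks 0 R₁₂ R₂₁ R₂₂ * P =
          fromBlocks 0 (L₂ * R₂₁ * U₂) (L₁ * R₁₂ * U₁) N₂₂ := by
  obtain ⟨T, V, hT, hTdet, hV, hVdet, hQ⟩ :=
    exists_isLowerTriangular_fromBlocks_mul_graphMatrix_unitary X
  obtain ⟨U, C, hU, hUdet, hC, hCdet, hP⟩ :=
    exists_isLowerTriangular_fromBlocks_mul_graphMatrix_unitary Yᴴ
  set F := fromBlocks T 0 0 V * graphMatrix X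
  set G := fromBlocks U 0 0 C * graphMatrix Yᴴ with hG
  rw [conjTranspose_conjTranspose] at hC hCdet
  have hadj : (1 + Y * Yᴴ) * Cᴴ = (C * (1 + Y * Yᴴ))ᴴ := by
    rw [conjTranspose_mul, (posDef_one_add_mul_conjTranspose Y).isHermitian.eq]
  have hGstar : Gᴴ = graphMatrix Y * fromBlocks Uᴴ 0 0 Cᴴ := by
    simp only [hG, conjTranspose_mul, conjTranspose_graphMatrix, conjTranspose_conjTranspose,
      fromBlocks_conjTranspose, conjTranspose_zero]
  refine ⟨Fᵀ, Gᴴ, V * (1 + Xᴴ * X), Uᴴ, T, (C * (1 + Y * Yᴴ))ᴴ, ?_, ?_, hV,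
    isUpperTriangular_conjTranspose hU, hT, isUpperTriangular_conjTranspose hC, ?_, ?_,
    fun R₁₂ R₂₁ R₂₂ h => ⟨V * ((Xᴴ * R₂₂ - R₁₂) * Yᴴ - Xᴴ * R₂₁) * Cᴴ, ?_⟩⟩
  · calc
      Fᵀᴴ * Fᵀ = (F * Fᴴ)ᵀ := (transpose_mul F Fᴴ).symm
      _ = 1 := by rw [hQ, transpose_one]
  · rwa [conjTranspose_conjTranspose]
  · rw [det_conjTranspose]
    exact mul_ne_zero hVdet (star_ne_zero.2 hUdet)
  · rw [det_conjTranspose]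
    exact mul_ne_zero hTdet (star_ne_zero.2 hCdet)
  · calc
      Fᵀᵀ * fromBlocks 0 R₁₂ R₂₁ R₂₂ * Gᴴ
        = fromBlocks T 0 0 V * (graphMatrix X * fromBlocks 0 R₁₂ R₂₁ R₂₂ * graphMatrix Y) *
            fromBlocks Uᴴ 0 0 Cᴴ := by
        rw [hGstar, transpose_transpose]
        simp only [F, Matrix.mul_assoc]
      _ = _ := by
        rw [graphMatrix_mul_fromBlocks_mul_graphMatrix h, ← hadj]
        simp [fromBlocks_multiply, Matrix.mul_assoc]

end UnitarySwap

lemma det_mul_mul_add_smul_mul_mul {K n : Type*} [CommRing K] [Fintype n] [DecidableEq n]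
    (L U R S : Matrix n n K) (z : K) :
    (L * R * U + z • (L * S * U)).det = L.det * U.det * (R + z • S).det := by
  have : L * R * U + z • (L * S * U) = L * (R + z • S) * U := by
    simp only [Matrix.mul_add, Matrix.add_mul, Matrix.mul_smul, Matrix.smul_mul]
  rw [this, det_mul, det_mul, mul_right_comm]

end

/-- swapping two pairs of blocks.  Here the size `m` of the paper is
`ℓ + q` with `1 ≤ ℓ` and `1 ≤ q = m − ℓ`.  `R = [[0, R₁₂], [R₂₁, R₂₂]]` and
`S = [[0, S₁₂], [S₂₁, S₂₂]]` have rows partitioned `(ℓ, q)` and columns `(q, ℓ)`,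
with `R₁₂, S₁₂ ∈ ℂ^{ℓ×ℓ}` and `R₂₁, S₂₁ ∈ ℂ^{q×q}` antitriangular, and the pencils
`R₁₂ − λ S₁₂` and `R₂₁ − λ S₂₁` regular with disjoint spectra (homogeneous form).
Then (i) the system `X R₁₂ + R₂₁ Y = −R₂₂`, `X S₁₂ + S₂₁ Y = −S₂₂` has a unique
solution, and (ii) there exist unitary `Q`, `P` such that `Qᵀ R P` and `Qᵀ S P` are
antitriangular-blocked with the spectra of the antidiagonal block pencils swapped. -/
theorem swap_block_pairs
    (ℓ q : ℕ) (hℓ : 1 ≤ ℓ) (hq : 1 ≤ q)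
    (R₁₂ S₁₂ : Matrix (Fin ℓ) (Fin ℓ) ℂ) (R₂₁ S₂₁ : Matrix (Fin q) (Fin q) ℂ)
    (R₂₂ S₂₂ : Matrix (Fin q) (Fin ℓ) ℂ)
    (hR₁₂ : Antitriangular R₁₂) (hS₁₂ : Antitriangular S₁₂)
    (hR₂₁ : Antitriangular R₂₁) (hS₂₁ : Antitriangular S₂₁)
    (hdisj : ∀ μ ν : ℂ, (μ, ν) ≠ (0, 0) →
      ¬ ((μ • R₁₂ - ν • S₁₂).det = 0 ∧ (μ • R₂₁ - ν • S₂₁).det = 0)) :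
    (∃! p : Matrix (Fin q) (Fin ℓ) ℂ × Matrix (Fin q) (Fin ℓ) ℂ,
        p.1 * R₁₂ + R₂₁ * p.2 = -R₂₂ ∧ p.1 * S₁₂ + S₂₁ * p.2 = -S₂₂) ∧
    ∃ (Q : Matrix (Fin ℓ ⊕ Fin q) (Fin q ⊕ Fin ℓ) ℂ)
      (P : Matrix (Fin q ⊕ Fin ℓ) (Fin ℓ ⊕ Fin q) ℂ)
      (N₂₁ M₂₁ : Matrix (Fin q) (Fin q) ℂ) (N₁₂ M₁₂ : Matrix (Fin ℓ) (Fin ℓ) ℂ)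
      (N₂₂ M₂₂ : Matrix (Fin ℓ) (Fin q) ℂ) (c₁ c₂ : ℂ),
        Qᴴ * Q = 1 ∧ Pᴴ * P = 1 ∧
        Antitriangular N₂₁ ∧ Antitriangular M₂₁ ∧
        Antitriangular N₁₂ ∧ Antitriangular M₁₂ ∧ c₁ ≠ 0 ∧ c₂ ≠ 0 ∧
        Qᵀ * Matrix.fromBlocks 0 R₁₂ R₂₁ R₂₂ * P = Matrix.fromBlocks 0 N₂₁ N₁₂ N₂₂ ∧
        Qᵀ * Matrix.fromBlocks 0 S₁₂ S₂₁ S₂₂ * P = Matrix.fromBlocks 0 M₂₁ M₁₂ M₂₂ ∧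
        (∀ z : ℂ, (N₁₂ + z • M₁₂).det = c₁ * (R₁₂ + z • S₁₂).det) ∧
        (∀ z : ℂ, (N₂₁ + z • M₂₁).det = c₂ * (R₂₁ + z • S₂₁).det) := by
  have hsolution := Antitriangular.existsUnique_mul_add_mul_eq hR₁₂ hS₁₂ hR₂₁ hS₂₁ hdisj
    (-R₂₂) (-S₂₂)
  refine ⟨hsolution, ?_⟩
  obtain ⟨⟨X, Y⟩, ⟨hR, hS⟩, -⟩ := hsolution
  obtain ⟨Q, P, L₁, U₁, L₂, U₂, hQ, hP, hL₁, hU₁, hL₂, hU₂, hdet₁, hdet₂, hswap⟩ :=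
    exists_unitary_swap_antidiagonal_blocks X Y
  obtain ⟨N₂₂, hN⟩ := hswap R₁₂ R₂₁ R₂₂ hR
  obtain ⟨M₂₂, hM⟩ := hswap S₁₂ S₂₁ S₂₂ hS
  exact ⟨Q, P, L₂ * R₂₁ * U₂, L₂ * S₂₁ * U₂, L₁ * R₁₂ * U₁, L₁ * S₁₂ * U₁, N₂₂, M₂₂,
    L₁.det * U₁.det, L₂.det * U₂.det, hQ, hP,
    hR₂₁.mul_mul hL₂ hU₂, hS₂₁.mul_mul hL₂ hU₂, hR₁₂.mul_mul hL₁ hU₁, hS₁₂.mul_mul hL₁ hU₁,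
    hdet₁, hdet₂, hN, hM,
    det_mul_mul_add_smul_mul_mul L₁ U₁ R₁₂ S₁₂, det_mul_mul_add_smul_mul_mul L₂ U₂ R₂₁ S₂₁⟩
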